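/- Let G be a bounded simply connected domain, z₀ ∈ ∂G, and D̄ a closed disk with z₀ on its boundary circle and D̄∖{z₀} ⊂ G. If there exist a point ζ₀ in the interior of D̄ and a line segment L from ζ₀ to z₀ such that g_G(z,ζ₀)/|z−z₀| → +∞ as z → z₀ along L, then for every point ζ in the open disk D (the interior of D̄) the same limit holds along the line segment from ζ to z₀: g_G(z,ζ)/|z−z₀| → +∞ as z → z₀ along that segment. -/

import Mathlib

open MeasureTheory Filter Metric Set Polynomial Topology
open scoped ENNReal Classical

noncomputable section

/-- The normalized zero counting measure of a polynomial. -/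
noncomputable def zeroMeasure (p : Polynomial ℂ) : Measure ℂ :=
  ((p.natDegree : ℝ≥0∞))⁻¹ • (p.roots.map (fun z => (Measure.dirac z : Measure ℂ))).sum

/-- Weak-star convergence of a sequence of measures along a filter: integrals of continuous
functions with compact support converge. -/
def WeakStarTo (μ : ℕ → Measure ℂ) (l : Filter ℕ) (ν : Measure ℂ) : Prop :=
  ∀ f : ℂ → ℝ, Continuous f → HasCompactSupport f →
    Tendsto (fun n => ∫ z, f z ∂(μ n)) l (𝓝 (∫ z, f z ∂ν))

/-- The logarithmic potential of a measure. -/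
noncomputable def logPotential (μ : Measure ℂ) (z : ℂ) : ℝ :=
  ∫ t, Real.log (1 / dist z t) ∂μ

/-- The logarithmic energy of a measure. -/
noncomputable def logEnergy (μ : Measure ℂ) : ℝ :=
  ∫ z, ∫ t, Real.log (1 / dist z t) ∂μ ∂μ

/-- The logarithmic kernel is integrable for the product measure. -/
def HasFiniteEnergy (μ : Measure ℂ) : Prop :=
  Integrable (fun p : ℂ × ℂ => Real.log (1 / dist p.1 p.2)) (μ.prod μ)

/-- The set of energies of probability measures of finite energy supported on `E`. -/
def energies (E : Set ℂ) : Set ℝ :=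
  {I | ∃ μ : Measure ℂ, IsProbabilityMeasure μ ∧ μ Eᶜ = 0 ∧ HasFiniteEnergy μ ∧ I = logEnergy μ}

/-- The logarithmic capacity of `E`: `exp(-V_E)` where `V_E` is the minimal energy, and `0`
if no probability measure on `E` has finite energy. -/
noncomputable def logCap (E : Set ℂ) : ℝ :=
  if (energies E).Nonempty then Real.exp (-sInf (energies E)) else 0

/-- `μ` is an equilibrium measure of `E`: an energy-minimizing probability measure on `E`. -/
def IsEquilibriumMeasure (E : Set ℂ) (μ : Measure ℂ) : Prop :=
  IsProbabilityMeasure μ ∧ μ Eᶜ = 0 ∧ HasFiniteEnergy μ ∧ logEnergy μ = sInf (energies E)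

/-- The sup norm of a polynomial on a set. -/
noncomputable def supNorm (E : Set ℂ) (p : Polynomial ℂ) : ℝ :=
  sSup ((fun z => ‖p.eval z‖) '' E)

/-- The unbounded connected component `Ω` of the complement of `E` (the points of the
complement whose connected component in the complement is unbounded). -/
def outerDomain (E : Set ℂ) : Set ℂ :=
  {z | z ∉ E ∧ ¬ Bornology.IsBounded (connectedComponentIn Eᶜ z)}

/-- A sequence of monic polynomials `P k` of respective degrees `N k`, indexed by an increasing
sequence `N` of positive integers, is asymptotically extremal on `E` if
`limsup ‖P k‖_E^(1/N k) ≤ cap E`. -/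
def AsymptoticallyExtremal (E : Set ℂ) (N : ℕ → ℕ) (P : ℕ → Polynomial ℂ) : Prop :=
  StrictMono N ∧ (∀ k, 0 < N k) ∧ (∀ k, (P k).Monic) ∧ (∀ k, (P k).natDegree = N k) ∧
    Filter.limsup (fun k => supNorm E (P k) ^ ((N k : ℝ)⁻¹)) atTop ≤ logCap E

/-- A function is harmonic on a planar set if it is locally the real part of an
analytic function. -/
def HarmonicOnPlane (u : ℂ → ℝ) (s : Set ℂ) : Prop :=
  ∀ z ∈ s, ∃ ε > 0, Metric.ball z ε ⊆ s ∧ ∃ f : ℂ → ℂ,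
    AnalyticOnNhd ℂ f (Metric.ball z ε) ∧ ∀ w ∈ Metric.ball z ε, u w = (f w).re

/-- `g` is the Green function of `G` with pole at `ζ`: harmonic and positive on `G ∖ {ζ}`,
`g(z) + log|z-ζ|` bounded near `ζ`, and `g → 0` at every boundary point of `G`. -/
structure IsGreenFunction (G : Set ℂ) (ζ : ℂ) (g : ℂ → ℝ) : Prop where
  harmonic : HarmonicOnPlane g (G \ {ζ})
  pos : ∀ z ∈ G \ {ζ}, 0 < g z
  logBounded : ∃ C : ℝ, ∀ᶠ z in 𝓝[G \ {ζ}] ζ, |g z + Real.log (dist z ζ)| ≤ C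
  boundaryLimit : ∀ t ∈ frontier G, Tendsto g (𝓝[G] t) (𝓝 0)

/-- `z₀` is a non-convex type singularity (NCS) point of `G`: a boundary point of `G`
carrying a closed disk `D̄ ⊆ G ∪ {z₀}` with `z₀` on its circumference, and a segment `L`
from a point `ζ₀` of the open disk to `z₀` along which `g_G(z,ζ₀)/|z-z₀| → +∞`. -/
def IsNCSPoint (G : Set ℂ) (z₀ : ℂ) : Prop :=
  z₀ ∈ frontier G ∧
    ∃ c : ℂ, ∃ r : ℝ, 0 < r ∧ dist z₀ c = r ∧ Metric.closedBall c r \ {z₀} ⊆ G ∧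
      ∃ ζ₀ ∈ Metric.ball c r, ∀ g : ℂ → ℝ, IsGreenFunction G ζ₀ g →
        Tendsto (fun z => g z / dist z z₀) (𝓝[segment ℝ ζ₀ z₀ \ {z₀}] z₀) atTop

end

/-!
Enclose `ζ₀` and `ζ` in a closed disk `K` concentric with `D` and smaller. By the minimum
principle on `G ∖ K`, some `m > 0` satisfies `m g₀ ≤ g` on all of `G ∖ K`. The homotheties centred
at `z₀` with small ratio `t` map `K` into `D ∖ K`, where `g` is positive and harmonic, so Harnack's
inequality on `K`, applied to `g` composed with the homothety, compares `g` at the points with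
parameter `t` of the two segments, with a constant that does not depend on `t`. Together the two
comparisons bound `g` from below along the segment from `ζ` by a multiple of `g₀` along the segment
from `ζ₀`, at distances from `z₀` having a fixed ratio.
-/

open InnerProductSpace

section Harnack

variable {u : ℂ → ℝ} {c w : ℂ} {R : ℝ}

lemma circleIntegrable_re_herglotzRieszKernel_smul (hu : ContinuousOn u (sphere c R))
    (hw : w ∈ ball c R) :
    CircleIntegrable ((Complex.re ∘ herglotzRieszKernel c w) • u) c R := by
  rw [← abs_of_pos (pos_of_mem_ball hw)] at hu
  exact ((Complex.continuous_re.comp_continuousOn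
    (continuousOn_herglotzRieszKernel_sphere hw)).smul hu).circleIntegrable'

theorem harnack_upper_bound (hu : HarmonicContOnCl u (ball c R))
    (hnonneg : ∀ z ∈ sphere c R, 0 ≤ u z) (hw : w ∈ ball c R) :
    u w ≤ (R + ‖w - c‖) / (R - ‖w - c‖) * u c := by
  have hR := pos_of_mem_ball hw
  have hcont : ContinuousOn u (sphere c R) :=
    hu.continuousOn_ball.mono sphere_subset_closedBall
  have hmean : Real.circleAverage u c R = u c :=
    InnerProductSpace.HarmonicContOnCl.circleAverage_eq (by rwa [abs_of_pos hR])
  rw [← hu.circleAverage_re_herglotzRieszKernel_smul hw, ← hmean, ← smul_eq_mul,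
    ← Real.circleAverage_smul]
  refine Real.circleAverage_mono (circleIntegrable_re_herglotzRieszKernel_smul hcont hw)
    ((hcont.circleIntegrable hR.le).const_smul) fun z hz => ?_
  rw [abs_of_pos hR] at hz
  exact mul_le_mul_of_nonneg_right (re_herglotzRieszKernel_le hz hw) (hnonneg z hz)

theorem harnack_lower_bound (hu : HarmonicContOnCl u (ball c R))
    (hnonneg : ∀ z ∈ sphere c R, 0 ≤ u z) (hw : w ∈ ball c R) :
    (R - ‖w - c‖) / (R + ‖w - c‖) * u c ≤ u w := by
  have hR := pos_of_mem_ball hw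
  have hcont : ContinuousOn u (sphere c R) :=
    hu.continuousOn_ball.mono sphere_subset_closedBall
  have hmean : Real.circleAverage u c R = u c :=
    InnerProductSpace.HarmonicContOnCl.circleAverage_eq (by rwa [abs_of_pos hR])
  rw [← hu.circleAverage_re_herglotzRieszKernel_smul hw, ← hmean, ← smul_eq_mul,
    ← Real.circleAverage_smul]
  refine Real.circleAverage_mono ((hcont.circleIntegrable hR.le).const_smul)
    (circleIntegrable_re_herglotzRieszKernel_smul hcont hw) fun z hz => ?_
  rw [abs_of_pos hR] at hz
  exact mul_le_mul_of_nonneg_right (le_re_herglotzRieszKernel hz hw) (hnonneg z hz)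

theorem exists_harnack_constant {z : ℂ} (hz : z ∈ ball c R) (hw : w ∈ ball c R) :
    ∃ κ > 0, ∀ u : ℂ → ℝ, HarmonicContOnCl u (ball c R) → (∀ x ∈ sphere c R, 0 ≤ u x) →
      κ * u w ≤ u z := by
  have hzR : 0 < R - ‖z - c‖ := sub_pos.2 (mem_ball_iff_norm.1 hz)
  have hwR : 0 < R - ‖w - c‖ := sub_pos.2 (mem_ball_iff_norm.1 hw)
  have hR := pos_of_mem_ball hz
  refine ⟨(R - ‖z - c‖) / (R + ‖z - c‖) * ((R - ‖w - c‖) / (R + ‖w - c‖)), by positivity,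
    fun u hu hnonneg => ?_⟩
  calc (R - ‖z - c‖) / (R + ‖z - c‖) * ((R - ‖w - c‖) / (R + ‖w - c‖)) * u w
      ≤ (R - ‖z - c‖) / (R + ‖z - c‖) * ((R - ‖w - c‖) / (R + ‖w - c‖)) *
          ((R + ‖w - c‖) / (R - ‖w - c‖) * u c) := by
        gcongr
        exact harnack_upper_bound hu hnonneg hw
    _ = (R - ‖z - c‖) / (R + ‖z - c‖) * u c := by field_simp
    _ ≤ u z := harnack_lower_bound hu hnonneg hz

end Harnack

section HarmonicFunctions

variable {h : ℂ → ℝ} {z : ℂ}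

lemma harmonicAt_comp_analyticAt {f : ℂ → ℂ} (hh : HarmonicAt h (f z)) (hf : AnalyticAt ℂ f z) :
    HarmonicAt (h ∘ f) z := by
  obtain ⟨ε, hε, hball⟩ := Metric.eventually_nhds_iff_ball.1 hh.eventually
  obtain ⟨F, hF, hFre⟩ := HarmonicOnNhd.exists_analyticOnNhd_ball_re_eq hball
  have hre : (fun y => (F (f y)).re) =ᶠ[𝓝 z] h ∘ f := by
    filter_upwards [hf.continuousAt.preimage_mem_nhds (ball_mem_nhds _ hε)] with y hy
      using hFre hy
  exact (harmonicAt_congr_nhds hre).1 ((hF _ (mem_ball_self hε)).comp hf).harmonicAt_re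

theorem eventually_eq_of_harmonicAt_of_isLocalMin (hh : HarmonicAt h z) (hmin : IsLocalMin h z) :
    ∀ᶠ y in 𝓝 z, h y = h z := by
  obtain ⟨ε, hε, hball⟩ := Metric.nhds_basis_closedBall.eventually_iff.1 (hh.eventually.and hmin)
  have hharm : HarmonicContOnCl (h - fun _ => h z) (ball z ε) :=
    HarmonicOnNhd.harmonicContOnCl fun y hy =>
      (hball (closure_ball_subset_closedBall hy)).1.sub (harmonicAt_const _)
  have hnonneg : ∀ y ∈ sphere z ε, 0 ≤ (h - fun _ => h z : ℂ → ℝ) y := fun y hy =>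
    sub_nonneg.2 (hball (sphere_subset_closedBall hy)).2
  filter_upwards [ball_mem_nhds z hε] with y hy
  have hle : h y - h z ≤ 0 := by simpa using harnack_upper_bound hharm hnonneg hy
  exact le_antisymm (sub_nonpos.1 hle) (hball (ball_subset_closedBall hy)).2

lemma isClosed_sublevel_of_eventually_lt {X α : Type*} [TopologicalSpace X] [LinearOrder α]
    [TopologicalSpace α] [ClosedIicTopology α] {U : Set X} {f : X → α} {a : α}
    (hf : ContinuousOn f U) (hbd : ∀ t ∈ closure U \ U, ∀ᶠ x in 𝓝[U] t, a < f x) :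
    IsClosed {x | x ∈ U ∧ f x ≤ a} := by
  refine isClosed_of_closure_subset fun t ht => ?_
  by_contra hnot
  have hlt : ∀ᶠ x in 𝓝[U] t, a < f x := by
    by_cases htU : t ∈ U
    · exact (hf t htU).eventually_mem (Ioi_mem_nhds (not_le.1 fun hle => hnot ⟨htU, hle⟩))
    · exact hbd t ⟨closure_mono (fun x hx => hx.1) ht, htU⟩
  obtain ⟨x, ⟨hxU, hxa⟩, hx⟩ := ((mem_closure_iff_frequently.1 ht).and_eventually
    (eventually_nhdsWithin_iff.1 hlt)).exists
  exact hxa.not_gt (hx hxU)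

theorem sublevel_eq_empty_of_harmonicOnNhd_of_isCompact {U : Set ℂ} (hU : IsOpen U)
    (hh : HarmonicOnNhd h U) {a : ℝ} (hcomp : IsCompact {x | x ∈ U ∧ h x ≤ a}) :
    {x | x ∈ U ∧ h x ≤ a} = ∅ := by
  set S := {x | x ∈ U ∧ h x ≤ a}
  by_contra hne
  have hcont : ContinuousOn h S := hh.continuousOn.mono fun x hx => hx.1
  obtain ⟨p, hpS, hp⟩ := hcomp.exists_isMinOn (nonempty_iff_ne_empty.2 hne) hcont
  have hmin : ∀ y ∈ U, h p ≤ h y := fun y hy =>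
    (le_total (h y) a).elim (fun hya => hp ⟨hy, hya⟩) hpS.2.trans
  set T := S ∩ h ⁻¹' {h p}
  have hTclosed : IsClosed T :=
    hcont.preimage_isClosed_of_isClosed hcomp.isClosed isClosed_singleton
  have hTopen : IsOpen T := by
    refine isOpen_iff_mem_nhds.2 fun z ⟨⟨hzU, hza⟩, hzp⟩ => ?_
    rw [mem_preimage, mem_singleton_iff] at hzp
    have hlocmin : IsLocalMin h z := by
      filter_upwards [hU.mem_nhds hzU] with y hy using hzp ▸ hmin y hy
    filter_upwards [hU.mem_nhds hzU,
      eventually_eq_of_harmonicAt_of_isLocalMin (hh z hzU) hlocmin] with y hyU hyz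
    exact ⟨⟨hyU, hyz.trans_le hza⟩, hyz.trans hzp⟩
  have hTuniv : T = univ := IsClopen.eq_univ ⟨hTclosed, hTopen⟩ ⟨p, hpS, rfl⟩
  exact noncompact_univ ℂ (hTuniv ▸ hcomp.of_isClosed_subset hTclosed inter_subset_left)

theorem nonneg_of_harmonicOnNhd_of_frontier {U : Set ℂ} (hU : IsOpen U)
    (hUb : Bornology.IsBounded U) (hh : HarmonicOnNhd h U)
    (hbd : ∀ t ∈ frontier U, ∀ ε > 0, ∀ᶠ x in 𝓝[U] t, -ε < h x) (hz : z ∈ U) : 0 ≤ h z := by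
  by_contra! hneg
  have hclosed : IsClosed {x | x ∈ U ∧ h x ≤ h z} :=
    isClosed_sublevel_of_eventually_lt hh.continuousOn fun t ht => by
      simpa using hbd t (hU.frontier_eq ▸ ht) (-h z) (neg_pos.2 hneg)
  have hcomp : IsCompact {x | x ∈ U ∧ h x ≤ h z} :=
    Metric.isCompact_of_isClosed_isBounded hclosed (hUb.subset fun x hx => hx.1)
  exact (sublevel_eq_empty_of_harmonicOnNhd_of_isCompact hU hh hcomp).subset
    (⟨hz, le_rfl⟩ : z ∈ U ∧ h z ≤ h z)

end HarmonicFunctions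

section Comparison

variable {G K : Set ℂ} {u v : ℂ → ℝ}

lemma frontier_sdiff_subset_union {X : Type*} [TopologicalSpace X] (s t : Set X) :
    frontier (s \ t) ⊆ frontier s ∪ frontier t := by
  rw [sdiff_eq, ← frontier_compl t]
  exact (frontier_inter_subset s tᶜ).trans (union_subset_union inter_subset_left inter_subset_right)

theorem le_of_harmonicOnNhd_of_frontier_le (hG : IsOpen G) (hGb : Bornology.IsBounded G)
    (hK : IsClosed K) (hKG : K ⊆ G) (hu : HarmonicOnNhd u (G \ interior K))
    (hv : HarmonicOnNhd v (G \ interior K)) (hle : ∀ x ∈ frontier K, v x ≤ u x)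
    (hu₀ : ∀ t ∈ frontier G, Tendsto u (𝓝[G] t) (𝓝 0))
    (hv₀ : ∀ t ∈ frontier G, Tendsto v (𝓝[G] t) (𝓝 0)) {x : ℂ} (hx : x ∈ G \ K) :
    v x ≤ u x := by
  have hharm : HarmonicOnNhd (u - v) (G \ interior K) := hu.sub hv
  refine sub_nonneg.1 (nonneg_of_harmonicOnNhd_of_frontier (h := u - v) (hG.sdiff hK)
    (hGb.subset sdiff_subset) (hharm.mono (sdiff_subset_sdiff_right interior_subset)) ?_ hx)
  intro t ht ε hε
  rcases frontier_sdiff_subset_union G K ht with htG | htK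
  · have hlim : Tendsto (u - v) (𝓝[G] t) (𝓝 0) := sub_zero (0 : ℝ) ▸ (hu₀ t htG).sub (hv₀ t htG)
    exact (hlim.mono_left (nhdsWithin_mono t sdiff_subset)).eventually
      (lt_mem_nhds (neg_neg_of_pos hε))
  · have hcont : ContinuousAt (u - v) t :=
      (hharm t ⟨hKG (hK.frontier_subset htK), htK.2⟩).1.continuousAt
    exact nhdsWithin_le_nhds (hcont.eventually
      (lt_mem_nhds ((neg_neg_of_pos hε).trans_le (sub_nonneg.2 (hle t htK)))))

theorem exists_pos_forall_mul_le_of_harmonicOnNhd (hG : IsOpen G) (hGb : Bornology.IsBounded G)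
    (hK : IsCompact K) (hKG : K ⊆ G) (hu : HarmonicOnNhd u (G \ interior K))
    (hv : HarmonicOnNhd v (G \ interior K)) (hpos : ∀ x ∈ frontier K, 0 < u x)
    (hu₀ : ∀ t ∈ frontier G, Tendsto u (𝓝[G] t) (𝓝 0))
    (hv₀ : ∀ t ∈ frontier G, Tendsto v (𝓝[G] t) (𝓝 0)) :
    ∃ m > 0, ∀ x ∈ G \ K, m * v x ≤ u x := by
  have hfr : IsCompact (frontier K) :=
    hK.of_isClosed_subset isClosed_frontier hK.isClosed.frontier_subset
  have hsub : frontier K ⊆ G \ interior K := fun x hx =>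
    ⟨hKG (hK.isClosed.frontier_subset hx), hx.2⟩
  obtain ⟨a, ha, hau⟩ := hfr.exists_forall_le' (hu.continuousOn.mono hsub) hpos
  obtain ⟨b, hb⟩ := hfr.bddAbove_image (hv.continuousOn.mono hsub)
  have hm : 0 < a / (|b| + 1) := by positivity
  refine ⟨a / (|b| + 1), hm, fun x hx => ?_⟩
  refine le_of_harmonicOnNhd_of_frontier_le (v := (a / (|b| + 1)) • v) hG hGb hK.isClosed hKG hu
    hv.const_smul (fun y hy => ?_) hu₀ (fun t ht => ?_) hx
  · calc a / (|b| + 1) * v y ≤ a / (|b| + 1) * (|b| + 1) := by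
          gcongr
          linarith [hb (mem_image_of_mem v hy), le_abs_self b]
      _ = a := by field_simp
      _ ≤ u y := hau y hy
  · exact smul_zero (A := ℝ) (a / (|b| + 1)) ▸ (hv₀ t ht).const_smul (a / (|b| + 1))

end Comparison

section Segment

variable {E : Type*} [NormedAddCommGroup E] [NormedSpace ℝ E] {p q : E}

lemma nhdsWithin_segment_sdiff_singleton (hqp : q ≠ p) :
    𝓝[segment ℝ q p \ {p}] p = map (AffineMap.lineMap p q) (𝓝[>] (0 : ℝ)) := by
  have hemb : IsEmbedding (AffineMap.lineMap p q : ℝ → E) :=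
    (antilipschitzWith_lineMap hqp.symm).isEmbedding (lipschitzWith_lineMap p q).continuous
  have himage : AffineMap.lineMap p q '' Ioc (0 : ℝ) 1 = segment ℝ q p \ {p} := by
    rw [← Icc_sdiff_left, image_sdiff hemb.injective, segment_symm,
      segment_eq_image_lineMap, image_singleton, AffineMap.lineMap_apply_zero]
  rw [← nhdsWithin_Ioc_eq_nhdsGT zero_lt_one, hemb.map_nhdsWithin_eq, himage,
    AffineMap.lineMap_apply_zero]

lemma tendsto_div_dist_segment_atTop_iff (hqp : q ≠ p) {f : E → ℝ} :
    Tendsto (fun x => f x / dist x p) (𝓝[segment ℝ q p \ {p}] p) atTop ↔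
      Tendsto (fun t : ℝ => f (AffineMap.lineMap p q t) / t) (𝓝[>] 0) atTop := by
  rw [nhdsWithin_segment_sdiff_singleton hqp, tendsto_map'_iff,
    ← tendsto_div_const_atTop_of_pos (f := fun t : ℝ => f (AffineMap.lineMap p q t) / t)
      (dist_pos.2 hqp.symm)]
  refine tendsto_congr' ?_
  filter_upwards [self_mem_nhdsWithin] with t ht
  rw [Function.comp_apply, dist_lineMap_left, Real.norm_of_nonneg (le_of_lt ht), div_div]

end Segment

section Homothety

lemma eventually_forall_lineMap_mem_ball_sdiff_closedBall {E : Type*} [NormedAddCommGroup E]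
    [NormedSpace ℝ E] {c z₀ : E} {r ρ : ℝ} (hz₀ : dist z₀ c = r) (hρ : ρ < r) :
    ∀ᶠ t : ℝ in 𝓝[>] 0, ∀ w ∈ closedBall c ρ,
      AffineMap.lineMap z₀ w t ∈ ball c r \ closedBall c ρ := by
  have hsmall : ∀ᶠ t : ℝ in 𝓝 0, t * (r + ρ) < r - ρ :=
    ContinuousAt.eventually_lt (by fun_prop) continuousAt_const (by simpa using hρ)
  filter_upwards [nhdsWithin_le_nhds hsmall, Ioc_mem_nhdsGT one_pos] with t ht ⟨ht0, ht1⟩ w hw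
  rw [mem_closedBall] at hw
  constructor
  · calc dist (AffineMap.lineMap z₀ w t) c
        ≤ (1 - t) * dist z₀ c + t * dist w c := by
          simpa [AffineMap.lineMap_apply_module] using
            (convexOn_univ_dist c).2 (mem_univ z₀) (mem_univ w) (sub_nonneg.2 ht1) ht0.le
              (sub_add_cancel 1 t)
      _ ≤ (1 - t) * r + t * ρ := by gcongr; exact hz₀.le
      _ < r := by nlinarith
  · have hdist : dist (AffineMap.lineMap z₀ w t) z₀ ≤ t * (r + ρ) := by
      rw [dist_lineMap_left, Real.norm_of_nonneg ht0.le]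
      gcongr
      exact (dist_triangle_right z₀ w c).trans (add_le_add hz₀.le hw)
    have htri := dist_triangle_left z₀ c (AffineMap.lineMap z₀ w t)
    rw [mem_closedBall, not_le]
    linarith

theorem exists_pos_eventually_mul_lineMap_le {g : ℂ → ℝ} {c z₀ z w : ℂ} {r ρ : ℝ}
    (hz₀ : dist z₀ c = r) (hρ : ρ < r)
    (hg : HarmonicOnNhd g (ball c r \ closedBall c ρ))
    (hnonneg : ∀ x ∈ ball c r \ closedBall c ρ, 0 ≤ g x)
    (hz : z ∈ ball c ρ) (hw : w ∈ ball c ρ) :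
    ∃ κ > 0, ∀ᶠ t : ℝ in 𝓝[>] 0,
      κ * g (AffineMap.lineMap z₀ w t) ≤ g (AffineMap.lineMap z₀ z t) := by
  obtain ⟨κ, hκ, hharnack⟩ := exists_harnack_constant hz hw
  refine ⟨κ, hκ, ?_⟩
  filter_upwards [eventually_forall_lineMap_mem_ball_sdiff_closedBall hz₀ hρ] with t ht
  refine hharnack (fun x => g (AffineMap.lineMap z₀ x t))
    (HarmonicOnNhd.harmonicContOnCl fun x hx => ?_)
    fun x hx => hnonneg _ (ht x (sphere_subset_closedBall hx))
  refine harmonicAt_comp_analyticAt (hg _ (ht x (closure_ball_subset_closedBall hx))) ?_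
  simp only [AffineMap.lineMap_apply_module]
  fun_prop

end Homothety

lemma HarmonicOnPlane.harmonicOnNhd {u : ℂ → ℝ} {s : Set ℂ} (hu : HarmonicOnPlane u s) :
    HarmonicOnNhd u s := by
  intro z hz
  obtain ⟨ε, hε, -, f, hf, hfre⟩ := hu z hz
  refine (harmonicAt_congr_nhds ?_).2 (hf z (mem_ball_self hε)).harmonicAt_re
  filter_upwards [ball_mem_nhds z hε] with w hw using hfre w hw

namespace IsGreenFunction

variable {G K : Set ℂ} {ζ ζ₀ : ℂ} {g g₀ : ℂ → ℝ}

theorem exists_pos_forall_mul_le (hG : IsOpen G) (hGb : Bornology.IsBounded G)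
    (hK : IsCompact K) (hKG : K ⊆ G) (hζ : ζ ∈ interior K) (hζ₀ : ζ₀ ∈ interior K)
    (hg : IsGreenFunction G ζ g) (hg₀ : IsGreenFunction G ζ₀ g₀) :
    ∃ m > 0, ∀ x ∈ G \ K, m * g₀ x ≤ g x :=
  exists_pos_forall_mul_le_of_harmonicOnNhd hG hGb hK hKG
    (hg.harmonic.harmonicOnNhd.mono (sdiff_subset_sdiff_right (singleton_subset_iff.2 hζ)))
    (hg₀.harmonic.harmonicOnNhd.mono (sdiff_subset_sdiff_right (singleton_subset_iff.2 hζ₀)))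
    (fun x hx => hg.pos x ⟨hKG (hK.isClosed.frontier_subset hx), fun hxζ => hx.2 (hxζ ▸ hζ)⟩)
    hg.boundaryLimit hg₀.boundaryLimit

theorem exists_pos_eventually_lineMap_le {z₀ c : ℂ} {r ρ : ℝ} (hG : IsOpen G)
    (hGb : Bornology.IsBounded G) (hcirc : dist z₀ c = r) (hρ : ρ < r) (hdisk : ball c r ⊆ G)
    (hζ : ζ ∈ ball c ρ) (hζ₀ : ζ₀ ∈ ball c ρ)
    (hg : IsGreenFunction G ζ g) (hg₀ : IsGreenFunction G ζ₀ g₀) :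
    ∃ m > 0, ∀ᶠ t : ℝ in 𝓝[>] 0,
      m * g₀ (AffineMap.lineMap z₀ ζ₀ t) ≤ g (AffineMap.lineMap z₀ ζ t) := by
  have hannulus : ball c r \ closedBall c ρ ⊆ G \ {ζ} :=
    sdiff_subset_sdiff hdisk (singleton_subset_iff.2 (ball_subset_closedBall hζ))
  obtain ⟨m, hm, hcomp⟩ := exists_pos_forall_mul_le hG hGb (isCompact_closedBall c ρ)
    ((closedBall_subset_ball hρ).trans hdisk) (ball_subset_interior_closedBall hζ)
    (ball_subset_interior_closedBall hζ₀) hg hg₀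
  obtain ⟨κ, hκ, hharnack⟩ := exists_pos_eventually_mul_lineMap_le hcirc hρ
    (hg.harmonic.harmonicOnNhd.mono hannulus) (fun x hx => (hg.pos x (hannulus hx)).le) hζ hζ₀
  refine ⟨κ * m, mul_pos hκ hm, ?_⟩
  filter_upwards [hharnack, eventually_forall_lineMap_mem_ball_sdiff_closedBall hcirc hρ]
    with t ht hmem
  obtain ⟨hball, hnot⟩ := hmem ζ₀ (ball_subset_closedBall hζ₀)
  calc κ * m * g₀ (AffineMap.lineMap z₀ ζ₀ t)
      = κ * (m * g₀ (AffineMap.lineMap z₀ ζ₀ t)) := mul_assoc _ _ _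
    _ ≤ κ * g (AffineMap.lineMap z₀ ζ₀ t) := by
        gcongr
        exact hcomp _ ⟨hdisk hball, hnot⟩
    _ ≤ g (AffineMap.lineMap z₀ ζ t) := ht

end IsGreenFunction

theorem NCS_limit_for_every_disk_point_general
    {G : Set ℂ} (hGopen : IsOpen G) (hGbdd : Bornology.IsBounded G)
    {z₀ c : ℂ} {r : ℝ} (hcirc : dist z₀ c = r) (hdisk : ball c r ⊆ G)
    {ζ₀ : ℂ} (hζ₀ : ζ₀ ∈ ball c r) {g₀ : ℂ → ℝ} (hg₀ : IsGreenFunction G ζ₀ g₀)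
    (hlim : Tendsto (fun z => g₀ z / dist z z₀) (𝓝[segment ℝ ζ₀ z₀ \ {z₀}] z₀) atTop)
    {ζ : ℂ} (hζ : ζ ∈ ball c r) {g : ℂ → ℝ} (hg : IsGreenFunction G ζ g) :
    Tendsto (fun z => g z / dist z z₀) (𝓝[segment ℝ ζ z₀ \ {z₀}] z₀) atTop := by
  have hne : ∀ w ∈ ball c r, w ≠ z₀ := fun w hw => ne_of_mem_of_not_mem hw hcirc.not_lt
  obtain ⟨ρ, hmax, hρ⟩ := exists_between (max_lt (mem_ball.1 hζ) (mem_ball.1 hζ₀))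
  obtain ⟨hζρ, hζ₀ρ⟩ := max_lt_iff.1 hmax
  obtain ⟨m, hm, hle⟩ :=
    hg.exists_pos_eventually_lineMap_le hGopen hGbdd hcirc hρ hdisk hζρ hζ₀ρ hg₀
  rw [tendsto_div_dist_segment_atTop_iff (hne ζ₀ hζ₀)] at hlim
  rw [tendsto_div_dist_segment_atTop_iff (hne ζ hζ)]
  refine tendsto_atTop_mono' _ ?_ (hlim.const_mul_atTop hm)
  filter_upwards [hle, self_mem_nhdsWithin] with t ht htpos
  rw [← mul_div_assoc]
  exact div_le_div_of_nonneg_right ht (le_of_lt htpos)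


/-- **Remark after Definition 2.1.** Let `G` be a bounded simply connected domain, `z₀ ∈ ∂G`,
and `D̄` a closed disk with `z₀` on its circumference and `D̄ ∖ {z₀} ⊆ G`. If for some point
`ζ₀` of the open disk the Green function satisfies `g_G(z,ζ₀)/|z-z₀| → +∞` along the segment
from `ζ₀` to `z₀`, then the same holds for every point `ζ` of the open disk, along the segment
from `ζ` to `z₀`. -/
theorem NCS_limit_for_every_disk_point
    (G : Set ℂ) (hGopen : IsOpen G) (hGconn : IsConnected G)
    (hGbdd : Bornology.IsBounded G) (hGsc : SimplyConnectedSpace G)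
    (z₀ : ℂ) (hz₀ : z₀ ∈ frontier G)
    (c : ℂ) (r : ℝ) (hr : 0 < r) (hcirc : dist z₀ c = r)
    (hdisk : Metric.closedBall c r \ {z₀} ⊆ G)
    (ζ₀ : ℂ) (hζ₀ : ζ₀ ∈ Metric.ball c r)
    (g₀ : ℂ → ℝ) (hg₀ : IsGreenFunction G ζ₀ g₀)
    (hlim : Tendsto (fun z => g₀ z / dist z z₀) (𝓝[segment ℝ ζ₀ z₀ \ {z₀}] z₀) atTop) :
    ∀ ζ ∈ Metric.ball c r, ∀ g : ℂ → ℝ, IsGreenFunction G ζ g →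
      Tendsto (fun z => g z / dist z z₀) (𝓝[segment ℝ ζ z₀ \ {z₀}] z₀) atTop := by
  intro ζ hζ g hg
  exact NCS_limit_for_every_disk_point_general hGopen hGbdd hcirc
    ((subset_sdiff_singleton ball_subset_closedBall hcirc.not_lt).trans hdisk) hζ₀ hg₀ hlim hζ hg
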